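/- Let n ≥ 3, let J be a nonempty even subgraph of the wheel W_n, and let I ∈ SI_5. Then W_n admits no σ_{J,I}-faithful flow if and only if at least one of the following holds: (i) I = ∅; (ii) I = (2,3); (iii) I ⊆ (4,1), n is odd, and among any three consecutive edges of the external cycle of W_n at least one belongs to J; (iv) I ⊆ (1,2)∪(3,4) and either n > 3 is odd and J is the edge set of the external cycle of W_n, or n = 3 and J is a 3-cycle. -/

import Mathlib

open scoped Classical

/-- A finite multigraph: finite vertex and edge types together with a reference
orientation recorded by source and target maps.  The underlying undirected graph
is obtained by forgetting the directions; reorienting an edge corresponds to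
negating the value of a flow on it. -/
structure Multigraph where
  V : Type
  E : Type
  [fintypeV : Fintype V]
  [fintypeE : Fintype E]
  src : E → V
  tgt : E → V

attribute [instance] Multigraph.fintypeV Multigraph.fintypeE

namespace Multigraph

/-- `f` is a flow with respect to the reference orientation: at every vertex the
sum of the values on incoming edges equals the sum on outgoing edges. -/
def IsFlow (G : Multigraph) {M : Type*} [AddCommMonoid M] (f : G.E → M) : Prop :=
  ∀ v : G.V, (∑ e : G.E, Set.indicator {e' : G.E | G.tgt e' = v} f e)
           = ∑ e : G.E, Set.indicator {e' : G.E | G.src e' = v} f e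

/-- The edge `e` joins the vertices `v` and `w` (in either direction). -/
def Joins (G : Multigraph) (e : G.E) (v w : G.V) : Prop :=
  (G.src e = v ∧ G.tgt e = w) ∨ (G.src e = w ∧ G.tgt e = v)

/-- `v` and `w` are adjacent: some edge joins them. -/
def Adj (G : Multigraph) (v w : G.V) : Prop := ∃ e : G.E, G.Joins e v w

/-- The degree of a vertex (loops count twice). -/
noncomputable def degree (G : Multigraph) (v : G.V) : ℕ :=
  Nat.card {e : G.E // G.src e = v} + Nat.card {e : G.E // G.tgt e = v}

/-- A set of edges is an even subgraph if every vertex is incident with an even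
number of its edges (loops counting twice). -/
def IsEvenSubgraph (G : Multigraph) (J : Set G.E) : Prop :=
  ∀ v : G.V, Even (Nat.card {e : G.E // e ∈ J ∧ G.src e = v}
    + Nat.card {e : G.E // e ∈ J ∧ G.tgt e = v})

/-- `G` has a circular nowhere-zero `r`-flow: for some orientation (encoded by
possibly negating values with respect to the reference orientation) there is a
real-valued flow with all values in `[1, r-1]`. -/
def HasCNZF (G : Multigraph) (r : ℝ) : Prop :=
  ∃ f : G.E → ℝ, G.IsFlow f ∧
    ∀ e : G.E, f e ∈ Set.Icc 1 (r - 1) ∨ -f e ∈ Set.Icc 1 (r - 1)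

/-- The circular flow number `Φ_c(G)`, as an extended real (`⊤` if no `r`-CNZF
exists for any `r ≥ 2`). -/
noncomputable def flowNumber (G : Multigraph) : EReal :=
  sInf {x : EReal | ∃ r : ℝ, x = (r : EReal) ∧ 2 ≤ r ∧ G.HasCNZF r}

/-- `G` has a modular circular nowhere-zero `r`-flow: a flow with values in
`ℝ/rℤ` lying (up to reorientation) in the image of `[1, r-1]`. -/
def HasMCNZF (G : Multigraph) (r : ℝ) : Prop :=
  ∃ f : G.E → AddCircle r, G.IsFlow f ∧
    ∀ e : G.E, f e ∈ (fun t : ℝ => (t : AddCircle r)) '' Set.Icc 1 (r - 1) ∨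
      -f e ∈ (fun t : ℝ => (t : AddCircle r)) '' Set.Icc 1 (r - 1)

/-- `G` has a sub-`r`-MCNZF: an `r`-MCNZF all of whose values lie in the image
of the open interval `(1, r-1)`. -/
def HasSubMCNZF (G : Multigraph) (r : ℝ) : Prop :=
  ∃ f : G.E → AddCircle r, G.IsFlow f ∧
    ∀ e : G.E, f e ∈ (fun t : ℝ => (t : AddCircle r)) '' Set.Ioo 1 (r - 1) ∨
      -f e ∈ (fun t : ℝ => (t : AddCircle r)) '' Set.Ioo 1 (r - 1)

end Multigraph

/-- The right endpoint representative: the representative of `b` in `(a, a+5]`. -/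
def arcEnd (a b : ℤ) : ℤ := a + (if (b - a) % 5 = 0 then 5 else (b - a) % 5)

/-- The open integer arc `(a, b)` in `ℝ/5ℤ`: the image of the real interval
`(a, b')` where `b'` is the representative of `b` in `(a, a+5]`. -/
def arc (a b : ℤ) : Set (AddCircle (5 : ℝ)) :=
  (fun t : ℝ => (t : AddCircle (5 : ℝ))) '' Set.Ioo (a : ℝ) (arcEnd a b : ℝ)

/-- `SI_5`: the symmetric subsets of `ℝ/5ℤ` that are unions of open integer arcs. -/
def SI5 : Set (Set (AddCircle (5 : ℝ))) :=
  {A | (∀ z, z ∈ A ↔ -z ∈ A) ∧ ∃ s : Set (ℤ × ℤ), A = ⋃ p ∈ s, arc p.1 p.2}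

/-- The measure `Me A`: the number of (distinct) open unit arcs contained in `A`. -/
noncomputable def Me (A : Set (AddCircle (5 : ℝ))) : ℕ :=
  Set.ncard {B : Set (AddCircle (5 : ℝ)) | B ⊆ A ∧ ∃ k : ℤ, B = arc k (k + 1)}

namespace Multigraph

/-- `G⁺_{xy}`: the graph `G` with one extra edge `e⁺` from `x` to `y`. -/
def addEdge (G : Multigraph) (x y : G.V) : Multigraph where
  V := G.V
  E := Option G.E
  src := fun e => e.elim x G.src
  tgt := fun e => e.elim y G.tgt

/-- The open 5-capacity of the generalised edge `G_{xy}`: all values that can pass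
from `x` to `y` through `G` by a modular 5-flow of `G⁺_{xy}` whose values on the
edges of `G` lie in the open arc `(1,4)`. -/
def CP5 (G : Multigraph) (x y : G.V) : Set (AddCircle (5 : ℝ)) :=
  {w | ∃ f : Option G.E → AddCircle (5 : ℝ),
    (G.addEdge x y).IsFlow f ∧ (∀ e : G.E, f (some e) ∈ arc 1 4) ∧ f none = w}

/-- `G` has a sub-5-MCNZF: a modular 5-flow with all values in the open arc `(1,4)`. -/
def HasSub5 (G : Multigraph) : Prop :=
  ∃ f : G.E → AddCircle (5 : ℝ), G.IsFlow f ∧ ∀ e : G.E, f e ∈ arc 1 4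

/-- `G` has a `σ`-faithful flow: a modular 5-flow `f` with `f e ∈ σ e` for all `e`. -/
def HasFaithful (G : Multigraph) (σ : G.E → Set (AddCircle (5 : ℝ))) : Prop :=
  ∃ f : G.E → AddCircle (5 : ℝ), G.IsFlow f ∧ ∀ e : G.E, f e ∈ σ e

/-- `G` has a `σ_{J,A}`-faithful flow: a modular 5-flow with values in `A` on the
edges of `J` and in the open arc `(1,4)` on all other edges. -/
def HasFaithfulOn (G : Multigraph) (J : Set G.E) (A : Set (AddCircle (5 : ℝ))) : Prop :=
  ∃ f : G.E → AddCircle (5 : ℝ), G.IsFlow f ∧ (∀ e ∈ J, f e ∈ A) ∧ ∀ e ∉ J, f e ∈ arc 1 4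

end Multigraph

/-- Cyclic successor on `Fin n`. -/
def rot (n : ℕ) (i : Fin n) : Fin n := ⟨(i.val + 1) % n, Nat.mod_lt _ i.pos⟩

/-- The wheel `W_n`: the external cycle `v_1 … v_n` (vertices `some i`, rim edges
`Sum.inl i` from `v_i` to `v_{i+1}`) together with a hub `v_c = none` joined to
every rim vertex by the spokes `Sum.inr i`. -/
def wheel (n : ℕ) : Multigraph where
  V := Option (Fin n)
  E := Fin n ⊕ Fin n
  src := fun e => match e with
    | Sum.inl i => some i
    | Sum.inr _ => none
  tgt := fun e => match e with
    | Sum.inl i => some (rot n i)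
    | Sum.inr i => some i

/-- `J` is a 3-cycle of the wheel: it consists of exactly the edges avoiding one
vertex (for `n = 3`, i.e. `W_3 = K_4`, these are precisely the triangles). -/
def IsTriangle (n : ℕ) (J : Set (wheel n).E) : Prop :=
  ∃ v : (wheel n).V, J = {e : (wheel n).E | (wheel n).src e ≠ v ∧ (wheel n).tgt e ≠ v}

/-!
An even subgraph of a wheel is determined by its external edges, and a modular flow by the values
`x i` on the external edges, the spokes carrying the differences `x (i + 1) - x i`.  A symmetric
union of open integer arcs contains, with any point, a whole band `m < ‖z‖ < m + 1` with
`m ∈ {0, 1, 2}`, so everything depends on the norms and on the signs `ε i` in `x i = ε i • ‖x i‖`.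
Flows are built from signs alternating round the external cycle, with one defect if `n` is odd;
the obstructions for `I ⊆ (4,1)` and `I ⊆ (1,2) ∪ (3,4)` force a sequence of signs to alternate, so
that `n` is even, and the one for `I = (2,3)` is the inequality `‖z‖ + ‖w‖ + ‖z - w‖ ≤ 5`.
-/

section CircleNorm

variable {p : ℝ}

theorem norm_coe_addCircle_eq_min (hp : 0 < p) {t : ℝ} (ht : |t| ≤ p) :
    ‖(t : AddCircle p)‖ = min |t| (p - |t|) := by
  wlog h₀ : 0 ≤ t generalizing t
  · have := this (t := -t) (by rwa [abs_neg]) (by linarith)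
    rwa [AddCircle.coe_neg, norm_neg, abs_neg] at this
  rw [abs_of_nonneg h₀] at ht ⊢
  rcases le_total t (p / 2) with h | h
  · rw [(AddCircle.norm_coe_eq_abs_iff p hp.ne').2 (by rwa [abs_of_pos hp, abs_of_nonneg h₀]),
      abs_of_nonneg h₀, min_eq_left (by linarith)]
  · have hneg : ‖((t - p : ℝ) : AddCircle p)‖ = |t - p| :=
      (AddCircle.norm_coe_eq_abs_iff p hp.ne').2 <| by
        rw [abs_of_pos hp, abs_of_nonpos (by linarith)]
        linarith
    rw [AddCircle.coe_sub, AddCircle.coe_period, sub_zero, abs_of_nonpos (by linarith)] at hneg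
    rw [hneg, min_eq_right (by linarith), neg_sub]

theorem addCircle_norm_le_half (hp : 0 < p) (z : AddCircle p) : ‖z‖ ≤ p / 2 := by
  simpa only [abs_of_pos hp] using AddCircle.norm_le_half_period p (x := z) hp.ne'

theorem exists_units_smul_norm_eq (hp : 0 < p) (z : AddCircle p) :
    ∃ ε : ℤˣ, z = ε • ((‖z‖ : ℝ) : AddCircle p) := by
  have : Fact (0 < p) := ⟨hp⟩
  obtain ⟨t, ht, rfl⟩ : z ∈ ((↑) : ℝ → AddCircle p) '' Set.Icc (-(p / 2)) (-(p / 2) + p) := by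
    rw [AddCircle.coe_image_Icc_eq]
    trivial
  have hnorm : ‖(t : AddCircle p)‖ = |t| := (AddCircle.norm_coe_eq_abs_iff p hp.ne').2 <| by
    rw [abs_of_pos hp, abs_le]
    exact ⟨ht.1, by linarith [ht.2]⟩
  rw [hnorm]
  rcases abs_choice t with h | h <;> rw [h]
  · exact ⟨1, (one_smul _ _).symm⟩
  · exact ⟨-1, by rw [AddCircle.coe_neg, Units.neg_smul, one_smul, neg_neg]⟩

theorem norm_sub_of_same_sign (hp : 0 < p) {ε : ℤˣ} {z w : AddCircle p}
    (hz : z = ε • ((‖z‖ : ℝ) : AddCircle p)) (hw : w = ε • ((‖w‖ : ℝ) : AddCircle p)) :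
    ‖z - w‖ = |‖z‖ - ‖w‖| := by
  have hz₂ := addCircle_norm_le_half hp z
  have hw₂ := addCircle_norm_le_half hp w
  calc ‖z - w‖ = ‖((‖z‖ - ‖w‖ : ℝ) : AddCircle p)‖ := by
        rw [congrArg₂ (· - ·) hz hw, ← smul_sub, norm_units_zsmul, AddCircle.coe_sub]
    _ = |‖z‖ - ‖w‖| := (AddCircle.norm_coe_eq_abs_iff p hp.ne').2 <| by
        rw [abs_of_pos hp, abs_le]
        constructor <;> linarith [norm_nonneg z, norm_nonneg w]

theorem norm_sub_of_opposite_sign (hp : 0 < p) {ε : ℤˣ} {z w : AddCircle p}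
    (hz : z = ε • ((‖z‖ : ℝ) : AddCircle p)) (hw : w = -ε • ((‖w‖ : ℝ) : AddCircle p)) :
    ‖z - w‖ = min (‖z‖ + ‖w‖) (p - (‖z‖ + ‖w‖)) := by
  have hz₂ := addCircle_norm_le_half hp z
  have hw₂ := addCircle_norm_le_half hp w
  have habs : |‖z‖ + ‖w‖| = ‖z‖ + ‖w‖ := abs_of_nonneg (by positivity)
  calc ‖z - w‖ = ‖((‖z‖ + ‖w‖ : ℝ) : AddCircle p)‖ := by
        rw [congrArg₂ (· - ·) hz hw, Units.neg_smul, sub_neg_eq_add, ← smul_add, norm_units_zsmul,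
          AddCircle.coe_add]
    _ = min (‖z‖ + ‖w‖) (p - (‖z‖ + ‖w‖)) := by
        rw [norm_coe_addCircle_eq_min hp (by linarith), habs]

theorem sign_eq_neg_of_abs_lt_norm_sub (hp : 0 < p) {ε δ : ℤˣ} {z w : AddCircle p}
    (hz : z = ε • ((‖z‖ : ℝ) : AddCircle p)) (hw : w = δ • ((‖w‖ : ℝ) : AddCircle p))
    (h : |‖z‖ - ‖w‖| < ‖z - w‖) : ε = -δ := by
  refine Int.units_ne_iff_eq_neg.1 fun heq => h.ne' ?_
  exact norm_sub_of_same_sign hp hz (heq ▸ hw)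

theorem sign_eq_of_norm_sub_lt_min (hp : 0 < p) {ε δ : ℤˣ} {z w : AddCircle p}
    (hz : z = ε • ((‖z‖ : ℝ) : AddCircle p)) (hw : w = δ • ((‖w‖ : ℝ) : AddCircle p))
    (h : ‖z - w‖ < min (‖z‖ + ‖w‖) (p - (‖z‖ + ‖w‖))) : ε = δ := by
  by_contra hne
  refine h.ne (norm_sub_of_opposite_sign hp hz ?_)
  rwa [← Int.units_ne_iff_eq_neg.1 (Ne.symm hne)]

theorem norm_add_norm_add_norm_sub_le (hp : 0 < p) (z w : AddCircle p) :
    ‖z‖ + ‖w‖ + ‖z - w‖ ≤ p := by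
  have hz₂ := addCircle_norm_le_half hp z
  have hw₂ := addCircle_norm_le_half hp w
  obtain ⟨ε, hz⟩ := exists_units_smul_norm_eq hp z
  obtain ⟨δ, hw⟩ := exists_units_smul_norm_eq hp w
  rcases eq_or_ne δ ε with rfl | h
  · rw [norm_sub_of_same_sign hp hz hw]
    rcases abs_cases (‖z‖ - ‖w‖) with h | h <;> linarith
  · obtain rfl := Int.units_ne_iff_eq_neg.1 h
    rw [norm_sub_of_opposite_sign hp hz hw]
    linarith [min_le_right (‖z‖ + ‖w‖) (p - (‖z‖ + ‖w‖))]

theorem coe_period_sub (t : ℝ) : ((p - t : ℝ) : AddCircle p) = -(t : AddCircle p) := by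
  rw [AddCircle.coe_sub, AddCircle.coe_period, zero_sub]

theorem mem_iff_norm_mem {A : Set (AddCircle p)} (hp : 0 < p) (hA : ∀ z ∈ A, -z ∈ A)
    (z : AddCircle p) : z ∈ A ↔ ((‖z‖ : ℝ) : AddCircle p) ∈ A := by
  obtain ⟨ε, hz⟩ := exists_units_smul_norm_eq hp z
  rcases Int.units_eq_one_or ε with rfl | rfl
  · rw [one_smul] at hz
    rw [← hz]
  · rw [Units.neg_smul, one_smul] at hz
    rw [neg_eq_iff_eq_neg.1 hz.symm]
    exact ⟨hA z, fun h => by simpa using hA _ h⟩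

theorem coe_image_Ioo_period_sub (hp : 0 < p) {a : ℝ} (ha : 0 ≤ a) :
    ((↑) : ℝ → AddCircle p) '' Set.Ioo a (p - a) = {z | a < ‖z‖} := by
  refine Set.Subset.antisymm ?_ fun z (hz : a < ‖z‖) => ?_
  · rintro _ ⟨t, ⟨h₁, h₂⟩, rfl⟩
    have habs : |t| = t := abs_of_nonneg (by linarith)
    rw [Set.mem_ofPred_eq, norm_coe_addCircle_eq_min hp (by linarith), habs]
    exact lt_min h₁ (by linarith)
  · have hz₂ := addCircle_norm_le_half hp z
    rw [mem_iff_norm_mem hp]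
    · exact ⟨‖z‖, ⟨hz, by linarith⟩, rfl⟩
    · rintro _ ⟨t, ⟨h₁, h₂⟩, rfl⟩
      exact ⟨p - t, ⟨by linarith, by linarith⟩, coe_period_sub t⟩

theorem coe_image_Ioo_period_sub_add (hp : 0 < p) {a : ℝ} (ha : a ≤ p / 2) :
    ((↑) : ℝ → AddCircle p) '' Set.Ioo (p - a) (p + a) = {z | ‖z‖ < a} := by
  refine Set.Subset.antisymm ?_ fun z (hz : ‖z‖ < a) => ?_
  · rintro _ ⟨t, ⟨h₁, h₂⟩, rfl⟩
    have habs : |t - p| < a := abs_lt.2 ⟨by linarith, by linarith⟩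
    rw [Set.mem_ofPred_eq, ← sub_zero (t : AddCircle p), ← AddCircle.coe_period p,
      ← AddCircle.coe_sub, norm_coe_addCircle_eq_min hp (by linarith)]
    exact (min_le_left _ _).trans_lt habs
  · rw [mem_iff_norm_mem hp]
    · exact ⟨‖z‖ + p, ⟨by linarith [norm_nonneg z], by linarith⟩, AddCircle.coe_add_period p _⟩
    · rintro _ ⟨t, ⟨h₁, h₂⟩, rfl⟩
      refine ⟨p - t + p, ⟨by linarith, by linarith⟩, ?_⟩
      exact (AddCircle.coe_add_period p _).trans (coe_period_sub t)

theorem coe_image_Ioo_union_Ioo_period_sub (hp : 0 < p) {a b : ℝ} (ha : 0 ≤ a) (hb : b ≤ p / 2) :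
    ((↑) : ℝ → AddCircle p) '' Set.Ioo a b ∪ (↑) '' Set.Ioo (p - b) (p - a) =
      {z | a < ‖z‖ ∧ ‖z‖ < b} := by
  refine Set.Subset.antisymm ?_ ?_
  · rintro _ (⟨t, ⟨h₁, h₂⟩, rfl⟩ | ⟨t, ⟨h₁, h₂⟩, rfl⟩)
    all_goals
      have habs : |t| = t := abs_of_nonneg (by linarith)
      rw [Set.mem_ofPred_eq, norm_coe_addCircle_eq_min hp (by linarith), habs]
    · rw [min_eq_left (by linarith)]
      exact ⟨h₁, h₂⟩
    · rw [min_eq_right (by linarith)]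
      constructor <;> linarith
  · rintro z ⟨h₁, h₂⟩
    rw [mem_iff_norm_mem hp]
    · exact Or.inl ⟨‖z‖, ⟨h₁, h₂⟩, rfl⟩
    · rintro _ (⟨t, ⟨h₁, h₂⟩, rfl⟩ | ⟨t, ⟨h₁, h₂⟩, rfl⟩)
      · exact Or.inr ⟨p - t, ⟨by linarith, by linarith⟩, coe_period_sub t⟩
      · exact Or.inl ⟨p - t, ⟨by linarith, by linarith⟩, coe_period_sub t⟩

end CircleNorm

section IntegerArcs

theorem arc_one_four : arc 1 4 = {z | 1 < ‖z‖} := by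
  rw [← coe_image_Ioo_period_sub (by norm_num) zero_le_one]
  norm_num [arc, arcEnd]

theorem arc_two_three : arc 2 3 = {z | 2 < ‖z‖} := by
  rw [← coe_image_Ioo_period_sub (by norm_num) zero_le_two]
  norm_num [arc, arcEnd]

theorem arc_four_one : arc 4 1 = {z | ‖z‖ < 1} := by
  rw [← coe_image_Ioo_period_sub_add (by norm_num) (by norm_num)]
  norm_num [arc, arcEnd]

theorem arc_one_two_union_arc_three_four : arc 1 2 ∪ arc 3 4 = {z | 1 < ‖z‖ ∧ ‖z‖ < 2} := by
  rw [← coe_image_Ioo_union_Ioo_period_sub (by norm_num) zero_le_one (by norm_num)]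
  norm_num [arc, arcEnd]

variable {I : Set (AddCircle (5 : ℝ))}

theorem coe_mem_arc_iff {t : ℝ} {a b : ℤ} :
    (t : AddCircle (5 : ℝ)) ∈ arc a b ↔ ∃ k : ℤ, a < t + k * 5 ∧ t + k * 5 < arcEnd a b := by
  have hcoe (k : ℤ) : ((t + k * 5 : ℝ) : AddCircle (5 : ℝ)) = t :=
    (QuotientAddGroup.eq_iff_sub_mem).2 ⟨k, by simp⟩
  constructor
  · rintro ⟨s, hs, hst⟩
    obtain ⟨k, hk⟩ := (QuotientAddGroup.eq_iff_sub_mem).1 hst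
    refine ⟨k, ?_⟩
    have : t + k * 5 = s := by
      simp only [zsmul_eq_mul] at hk
      linarith
    rwa [this]
  · rintro ⟨k, hk⟩
    exact ⟨t + k * 5, hk, hcoe k⟩

theorem coe_mem_arc_of_mem_Ioo {t s : ℝ} {a b m : ℤ} (ht : (t : AddCircle (5 : ℝ)) ∈ arc a b)
    (htm : t ∈ Set.Icc (m : ℝ) (m + 1)) (hsm : s ∈ Set.Ioo (m : ℝ) (m + 1)) :
    (s : AddCircle (5 : ℝ)) ∈ arc a b := by
  obtain ⟨k, ha, hb⟩ := coe_mem_arc_iff.1 ht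
  have ham : a < m + 1 + k * 5 := by
    have : (a : ℝ) < m + 1 + k * 5 := by linarith [htm.2]
    exact_mod_cast this
  have hmb : m + k * 5 < arcEnd a b := by
    have : (m + k * 5 : ℝ) < arcEnd a b := by linarith [htm.1]
    exact_mod_cast this
  have ham' : (a : ℝ) ≤ m + k * 5 := by exact_mod_cast (by linarith : a ≤ m + k * 5)
  have hmb' : (m + k * 5 + 1 : ℝ) ≤ arcEnd a b := by exact_mod_cast hmb
  exact coe_mem_arc_iff.2 ⟨k, by linarith [hsm.1], by linarith [hsm.2]⟩

/-- The points of `ℝ/5ℤ` at distance strictly between `m` and `m + 1` from zero.  For `m = 0, 1, 2`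
these are the minimal nonempty sets in `SI5`. -/
def band (m : ℤ) : Set (AddCircle (5 : ℝ)) := {z | m < ‖z‖ ∧ ‖z‖ < m + 1}

theorem band_subset_of_mem_SI5 (hI : I ∈ SI5) {z : AddCircle (5 : ℝ)} (hz : z ∈ I) {m : ℤ}
    (h₁ : m ≤ ‖z‖) (h₂ : ‖z‖ ≤ m + 1) : band m ⊆ I := by
  intro w hw
  obtain ⟨hsymm, S, rfl⟩ := hI
  rw [mem_iff_norm_mem (by norm_num) fun z => (hsymm z).1] at hz ⊢
  simp only [Set.mem_iUnion] at hz ⊢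
  obtain ⟨q, hq, hzq⟩ := hz
  exact ⟨q, hq, coe_mem_arc_of_mem_Ioo hzq ⟨h₁, h₂⟩ hw⟩

theorem subset_arc_four_one (hI : I ∈ SI5) (h₁ : ¬ band 1 ⊆ I) (h₂ : ¬ band 2 ⊆ I) :
    I ⊆ arc 4 1 := by
  intro z hz
  have hhalf := addCircle_norm_le_half (by norm_num) z
  rw [arc_four_one, Set.mem_ofPred_eq]
  by_contra! h
  rcases le_total ‖z‖ 2 with h' | h'
  · exact h₁ (band_subset_of_mem_SI5 hI hz (by simpa) (by push_cast; linarith))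
  · exact h₂ (band_subset_of_mem_SI5 hI hz (by simpa) (by push_cast; linarith))

theorem subset_arc_one_two_union_arc_three_four (hI : I ∈ SI5) (h₀ : ¬ band 0 ⊆ I)
    (h₂ : ¬ band 2 ⊆ I) : I ⊆ arc 1 2 ∪ arc 3 4 := by
  intro z hz
  have hhalf := addCircle_norm_le_half (by norm_num) z
  rw [arc_one_two_union_arc_three_four]
  constructor <;> by_contra! h
  · exact h₀ (band_subset_of_mem_SI5 hI hz (by simp) (by simpa))
  · exact h₂ (band_subset_of_mem_SI5 hI hz (by simpa) (by push_cast; linarith))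

theorem eq_arc_two_three (hI : I ∈ SI5) (hne : I.Nonempty) (h₀ : ¬ band 0 ⊆ I)
    (h₁ : ¬ band 1 ⊆ I) : I = arc 2 3 := by
  have hsub : I ⊆ {z | 2 < ‖z‖} := by
    intro z hz
    rw [Set.mem_ofPred_eq]
    by_contra! h
    rcases le_total ‖z‖ 1 with h' | h'
    · exact h₀ (band_subset_of_mem_SI5 hI hz (by simp) (by simpa))
    · exact h₁ (band_subset_of_mem_SI5 hI hz (by simpa) (by push_cast; linarith))
  have hthree (z : AddCircle (5 : ℝ)) : ‖z‖ < 3 :=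
    (addCircle_norm_le_half (by norm_num) z).trans_lt (by norm_num)
  obtain ⟨z, hz⟩ := hne
  have hband : band 2 ⊆ I := band_subset_of_mem_SI5 hI hz
    (by simpa using (hsub hz).le) (by push_cast; linarith [hthree z])
  rw [arc_two_three]
  refine hsub.antisymm fun w (hw : 2 < ‖w‖) => hband ⟨by simpa, ?_⟩
  push_cast
  linarith [hthree w]

end IntegerArcs

section CyclicSuccessor

variable {n : ℕ} [NeZero n]

theorem rot_eq_add_one (i : Fin n) : rot n i = i + 1 := by
  ext
  simp [rot, Fin.val_add]

theorem fin_add_one_ne (hn : 1 < n) (j : Fin n) : j + 1 ≠ j := by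
  rw [Ne, add_eq_left, Fin.ext_iff]
  simp [Nat.mod_eq_of_lt hn]

theorem fin_add_three_ne (hn : 3 < n) (j : Fin n) : j + 1 + 1 + 1 ≠ j := by
  rw [add_assoc, add_assoc, Ne, add_eq_left, Fin.ext_iff]
  simp [Fin.val_add, Nat.mod_eq_of_lt hn]

theorem fin_three_eq_or (i j : Fin 3) : i = j ∨ i = j + 1 ∨ i = j + 1 + 1 := by
  revert i j
  decide

theorem neg_one_pow_val_add_one {i : Fin n} (h : Even n ∨ i + 1 ≠ 0) :
    (-1 : ℤˣ) ^ (i + 1).val = -(-1) ^ i.val := by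
  have hval : (i + 1).val = (i.val + 1) % n := by simp [Fin.val_add]
  rw [hval, ← mul_neg_one (_ ^ _), ← pow_succ]
  rcases h with hn | hi
  · exact neg_one_pow_congr hn.mod_even_iff
  · rw [Nat.mod_eq_of_lt]
    refine lt_of_le_of_ne i.isLt fun hlast => hi (Fin.ext ?_)
    simp [hval, show i.val + 1 = n from hlast]

theorem even_iff_exists_alternating :
    Even n ↔ ∃ ε : Fin n → ℤˣ, ∀ i, ε (i + 1) = -ε i := by
  refine ⟨fun hn => ⟨fun i => (-1) ^ i.val, fun i => neg_one_pow_val_add_one (Or.inl hn)⟩, ?_⟩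
  rintro ⟨ε, hε⟩
  have hprod : ∏ i, ε i = (-1) ^ n * ∏ i, ε i :=
    calc ∏ i, ε i = ∏ i, ε (i + 1) := (Equiv.prod_comp (Equiv.addRight 1) ε).symm
      _ = (-1) ^ n * ∏ i, ε i := by simp [hε, Finset.prod_neg]
  rwa [right_eq_mul, neg_one_pow_eq_one_iff_even (by decide)] at hprod

theorem exists_alternating_off (j : Fin n) :
    ∃ ε : Fin n → ℤˣ, ∀ i, i ≠ j → ε (i + 1) = -ε i := by
  refine ⟨fun i => (-1) ^ (i - (j + 1)).val, fun i hi => ?_⟩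
  have hshift : i + 1 - (j + 1) = i - (j + 1) + 1 := by abel
  have hne : i - (j + 1) + 1 ≠ 0 := by rwa [← hshift, add_sub_add_right_eq_sub, sub_ne_zero]
  simpa only [hshift] using neg_one_pow_val_add_one (Or.inr hne)

theorem exists_not_mem_iff_add_one_mem {R : Set (Fin n)} (hne : R.Nonempty)
    (huniv : R ≠ Set.univ) : ∃ i, ¬ (i ∈ R ↔ i + 1 ∈ R) := by
  by_contra! h
  obtain ⟨j, hj⟩ := hne
  have hmem (k : ℕ) : j + Fin.ofNat n k ∈ R := by
    induction k with
    | zero => simpa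
    | succ k ih =>
      have : Fin.ofNat n (k + 1) = Fin.ofNat n k + 1 := by
        ext
        simp [Fin.val_add]
      rw [this, ← add_assoc]
      exact (h _).1 ih
  exact huniv (Set.eq_univ_of_forall fun i => by simpa using hmem (i - j).val)

end CyclicSuccessor

section Flows

theorem Multigraph.isEvenSubgraph_iff_isFlow {G : Multigraph} {J : Set G.E} :
    G.IsEvenSubgraph J ↔ G.IsFlow (J.indicator (1 : G.E → ZMod 2)) := by
  have hcard (P : Set G.E) : ∑ e, P.indicator (J.indicator (1 : G.E → ZMod 2)) e =
      (Nat.card {e // e ∈ J ∧ e ∈ P} : ℕ) := by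
    rw [Set.indicator_indicator]
    simp [Set.indicator_apply, Nat.card_eq_fintype_card, Fintype.card_subtype, and_comm]
  refine forall_congr' fun v => ?_
  rw [hcard, hcard, ← CharTwo.add_eq_zero, ← Nat.cast_add, ZMod.natCast_eq_zero_iff_even, add_comm]
  rfl

variable {n : ℕ}

/-- The external edge of the wheel from `v_i` to `v_{i+1}`. -/
def rim (i : Fin n) : (wheel n).E := Sum.inl i

/-- The edge of the wheel from the hub to `v_i`. -/
def spoke (i : Fin n) : (wheel n).E := Sum.inr i

theorem rim_ne_spoke (i j : Fin n) : rim i ≠ spoke j := Sum.inl_ne_inr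

section WheelSums

variable {M : Type*} [AddCommMonoid M] (f : (wheel n).E → M)

theorem wheel_sum : ∑ e, f e = ∑ i, f (rim i) + ∑ i, f (spoke i) :=
  Fintype.sum_sum_type f

theorem wheel_sum_tgt_hub : ∑ e, Set.indicator {e' | (wheel n).tgt e' = none} f e = 0 := by
  simp only [wheel_sum, Set.indicator_apply, Set.mem_ofPred_eq]
  simp [wheel, rim, spoke]

theorem wheel_sum_src_hub :
    ∑ e, Set.indicator {e' | (wheel n).src e' = none} f e = ∑ i, f (spoke i) := by
  simp only [wheel_sum, Set.indicator_apply, Set.mem_ofPred_eq]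
  simp [wheel, rim, spoke]

theorem wheel_sum_src_rim (i : Fin n) :
    ∑ e, Set.indicator {e' | (wheel n).src e' = some i} f e = f (rim i) := by
  simp only [wheel_sum, Set.indicator_apply, Set.mem_ofPred_eq]
  simp [wheel, rim, spoke]

theorem wheel_sum_tgt_rim [NeZero n] (i : Fin n) :
    ∑ e, Set.indicator {e' | (wheel n).tgt e' = some (i + 1)} f e =
      f (rim i) + f (spoke (i + 1)) := by
  simp only [wheel_sum, Set.indicator_apply, Set.mem_ofPred_eq]
  simp [wheel, rim, spoke, rot_eq_add_one]

end WheelSums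

variable [NeZero n]

theorem wheel_isFlow_iff {M : Type*} [AddCommGroup M] {f : (wheel n).E → M} :
    (wheel n).IsFlow f ↔ ∀ i, f (spoke (i + 1)) = f (rim (i + 1)) - f (rim i) := by
  constructor
  · intro h i
    have := h (some (i + 1))
    rw [wheel_sum_tgt_rim, wheel_sum_src_rim] at this
    exact eq_sub_of_add_eq' this
  · rintro h (_ | i)
    · rw [wheel_sum_tgt_hub, wheel_sum_src_hub]
      calc 0 = ∑ i : Fin n, (f (rim (i + 1)) - f (rim i)) := by
            rw [Finset.sum_sub_distrib, sub_eq_zero.2]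
            exact Equiv.sum_comp (Equiv.addRight 1) fun i : Fin n => f (rim i)
        _ = ∑ i : Fin n, f (spoke (i + 1)) := Finset.sum_congr rfl fun i _ => (h i).symm
        _ = ∑ i, f (spoke i) := Equiv.sum_comp (Equiv.addRight 1) fun i : Fin n => f (spoke i)
    · obtain ⟨i, rfl⟩ : ∃ j, j + 1 = i := ⟨i - 1, sub_add_cancel i 1⟩
      rw [wheel_sum_tgt_rim, wheel_sum_src_rim, h, add_sub_cancel]

theorem wheel_isEvenSubgraph_iff {J : Set (wheel n).E} :
    (wheel n).IsEvenSubgraph J ↔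
      ∀ i, spoke (i + 1) ∈ J ↔ ¬ (rim i ∈ J ↔ rim (i + 1) ∈ J) := by
  rw [Multigraph.isEvenSubgraph_iff_isFlow, wheel_isFlow_iff]
  refine forall_congr' fun i => ?_
  by_cases h₀ : rim i ∈ J <;> by_cases h₁ : rim (i + 1) ∈ J <;> by_cases h₂ : spoke (i + 1) ∈ J <;>
    simp [h₀, h₁, h₂, CharTwo.neg_eq]

/-- The external edges of a wheel which belong to `J`; they determine an even subgraph. -/
def rimSet (J : Set (wheel n).E) : Set (Fin n) := rim ⁻¹' J

theorem rimSet_injOn : Set.InjOn rimSet {J : Set (wheel n).E | (wheel n).IsEvenSubgraph J} := by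
  intro J hJ J' hJ' h
  have hrim (i : Fin n) : rim i ∈ J ↔ rim i ∈ J' := Set.ext_iff.1 h i
  have hspoke (i : Fin n) : spoke i ∈ J ↔ spoke i ∈ J' := by
    rw [← sub_add_cancel i 1, wheel_isEvenSubgraph_iff.1 hJ, wheel_isEvenSubgraph_iff.1 hJ',
      hrim, hrim]
  ext (i | i)
  · exact hrim i
  · exact hspoke i

variable {J : Set (wheel n).E}

theorem rimSet_nonempty (hJ : (wheel n).IsEvenSubgraph J) (hne : J.Nonempty) :
    (rimSet J).Nonempty := by
  rw [Set.nonempty_iff_ne_empty] at hne ⊢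
  exact fun h => hne (rimSet_injOn hJ (wheel_isEvenSubgraph_iff.2 (by simp)) h)

theorem eq_range_rim_iff (hJ : (wheel n).IsEvenSubgraph J) :
    J = Set.range rim ↔ rimSet J = Set.univ := by
  have hcycle : (wheel n).IsEvenSubgraph (Set.range rim) :=
    wheel_isEvenSubgraph_iff.2 (by simp [rim_ne_spoke])
  rw [← rimSet_injOn.eq_iff hJ hcycle, rimSet, rimSet, Set.preimage_range]

theorem isTriangle_three_iff {J : Set (wheel 3).E} (hJ : (wheel 3).IsEvenSubgraph J) :
    IsTriangle 3 J ↔ rimSet J = Set.univ ∨ ∃ j, rimSet J = {j} := by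
  set T : (wheel 3).V → Set (wheel 3).E := fun v => {e | (wheel 3).src e ≠ v ∧ (wheel 3).tgt e ≠ v}
  have hrim (v i : Fin 3) : rim i ∈ T (some v) ↔ i = v + 1 :=
    (by decide : ∀ v i : Fin 3, some i ≠ some v ∧ some (rot 3 i) ≠ some v ↔ i = v + 1) v i
  have hspoke (v i : Fin 3) : spoke i ∈ T (some v) ↔ i ≠ v :=
    (by decide : ∀ v i : Fin 3, none ≠ some v ∧ some i ≠ some v ↔ i ≠ v) v i
  have heven (v : Fin 3) : (wheel 3).IsEvenSubgraph (T (some v)) := by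
    simp only [wheel_isEvenSubgraph_iff, hrim, hspoke]
    revert v
    decide
  have hhub : T none = Set.range rim := by
    ext (i | i)
    · exact iff_of_true ⟨Option.some_ne_none i, Option.some_ne_none (rot 3 i)⟩ ⟨i, rfl⟩
    · exact iff_of_false (fun h => h.1 rfl) fun ⟨j, h⟩ => rim_ne_spoke j i h
  calc IsTriangle 3 J ↔ J = T none ∨ ∃ v : Fin 3, J = T (some v) := Option.exists
    _ ↔ rimSet J = Set.univ ∨ ∃ v : Fin 3, rimSet J = {v + 1} := by
        refine or_congr (hhub ▸ eq_range_rim_iff hJ) (exists_congr fun v => ?_)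
        rw [← rimSet_injOn.eq_iff hJ (heven v)]
        exact Eq.congr_right (Set.ext (hrim v))
    _ ↔ rimSet J = Set.univ ∨ ∃ j, rimSet J = {j} := by
        exact or_congr_right ((Equiv.addRight (1 : Fin 3)).exists_congr fun _ => Iff.rfl)

/-- The capacity `σ_{J,A}(e)` of an edge `e`, where `P` says that `e ∈ J`. -/
def capacity (A : Set (AddCircle (5 : ℝ))) (P : Prop) : Set (AddCircle (5 : ℝ)) :=
  if P then A else arc 1 4

theorem mem_capacity_iff {z : AddCircle (5 : ℝ)} {P : Prop} :
    z ∈ capacity I P ↔ (P → z ∈ I) ∧ (¬ P → 1 < ‖z‖) := by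
  by_cases hP : P <;> simp [capacity, arc_one_four, hP]

/-- `x` is the restriction to the external cycle of a `σ_{J,A}`-faithful flow on the wheel, where
`J` is the even subgraph with `rimSet J = R`. -/
def IsRimAssignment (R : Set (Fin n)) (A : Set (AddCircle (5 : ℝ)))
    (x : Fin n → AddCircle (5 : ℝ)) : Prop :=
  ∀ i, x i ∈ capacity A (i ∈ R) ∧ x (i + 1) - x i ∈ capacity A (¬ (i ∈ R ↔ i + 1 ∈ R))

theorem hasFaithfulOn_wheel_iff (hJ : (wheel n).IsEvenSubgraph J) (A : Set (AddCircle (5 : ℝ))) :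
    (wheel n).HasFaithfulOn J A ↔ ∃ x, IsRimAssignment (rimSet J) A x := by
  have hcap (f : (wheel n).E → AddCircle (5 : ℝ)) :
      ((∀ e ∈ J, f e ∈ A) ∧ ∀ e ∉ J, f e ∈ arc 1 4) ↔ ∀ e, f e ∈ capacity A (e ∈ J) := by
    rw [← forall_and]
    refine forall_congr' fun e => ?_
    by_cases he : e ∈ J <;> simp [capacity, he]
  simp only [Multigraph.HasFaithfulOn, hcap, wheel_isFlow_iff]
  constructor
  · rintro ⟨f, hflow, hf⟩
    refine ⟨f ∘ rim, fun i => ⟨hf (rim i), ?_⟩⟩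
    have := hf (spoke (i + 1))
    rwa [hflow, wheel_isEvenSubgraph_iff.1 hJ] at this
  · rintro ⟨x, hx⟩
    refine ⟨Sum.elim x fun i => x i - x (i - 1), fun i => ?_, ?_⟩
    · exact congrArg (x (i + 1) - x ·) (add_sub_cancel_right i 1)
    · rintro (i | i)
      · exact (hx i).1
      · have := (hx (i - 1)).2
        have hspoke := wheel_isEvenSubgraph_iff.1 hJ (i - 1)
        rw [sub_add_cancel] at this hspoke
        change x i - x (i - 1) ∈ capacity A (spoke i ∈ J)
        rwa [hspoke]

end Flows

section Constructions

variable {n : ℕ} {I : Set (AddCircle (5 : ℝ))}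

theorem neg_mem_capacity (hI : ∀ z ∈ I, -z ∈ I) {P : Prop} {z : AddCircle (5 : ℝ)}
    (hz : z ∈ capacity I P) : -z ∈ capacity I P := by
  rw [mem_capacity_iff, norm_neg] at *
  exact ⟨fun hP => hI z (hz.1 hP), hz.2⟩

theorem units_smul_mem_capacity (hI : ∀ z ∈ I, -z ∈ I) {P : Prop} {z : AddCircle (5 : ℝ)}
    (hz : z ∈ capacity I P) (ε : ℤˣ) : ε • z ∈ capacity I P := by
  rcases Int.units_eq_one_or ε with rfl | rfl
  · rwa [one_smul]
  · rw [Units.neg_smul, one_smul]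
    exact neg_mem_capacity hI hz

theorem coe_mem_capacity {t : ℝ} {P : Prop} (m : ℤ) (ht : |t| ≤ 5)
    (hP : P → band m ⊆ I ∧ m < min |t| (5 - |t|) ∧ min |t| (5 - |t|) < m + 1)
    (hP' : ¬ P → 1 < min |t| (5 - |t|)) : (t : AddCircle (5 : ℝ)) ∈ capacity I P := by
  rw [← norm_coe_addCircle_eq_min (by norm_num) ht] at hP hP'
  exact mem_capacity_iff.2 ⟨fun h => (hP h).1 (hP h).2, hP'⟩

variable [NeZero n] {R : Set (Fin n)}

/- `a` is multiplied by signs which alternate round the external cycle, except from `j` to `j + 1`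
if `n` is odd. -/
theorem exists_isRimAssignment_of_alternating (hI : ∀ z ∈ I, -z ∈ I) (a : Fin n → ℝ)
    (ha : ∀ i, (a i : AddCircle (5 : ℝ)) ∈ capacity I (i ∈ R))
    (hadd : ∀ i, ((a i + a (i + 1) : ℝ) : AddCircle (5 : ℝ)) ∈
      capacity I (¬ (i ∈ R ↔ i + 1 ∈ R)))
    (hsub : Even n ∨ ∃ j, ((a (j + 1) - a j : ℝ) : AddCircle (5 : ℝ)) ∈
      capacity I (¬ (j ∈ R ↔ j + 1 ∈ R))) :
    ∃ x, IsRimAssignment R I x := by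
  suffices h : ∃ ε : Fin n → ℤˣ, ∀ i, ε (i + 1) = -ε i ∨
      ((a (i + 1) - a i : ℝ) : AddCircle (5 : ℝ)) ∈ capacity I (¬ (i ∈ R ↔ i + 1 ∈ R)) by
    obtain ⟨ε, hε⟩ := h
    refine ⟨fun i => ε i • (a i : AddCircle (5 : ℝ)), fun i =>
      ⟨units_smul_mem_capacity hI (ha i) _, ?_⟩⟩
    rcases eq_or_ne (ε (i + 1)) (ε i) with heq | hne
    · have := (hε i).resolve_left (heq ▸ units_ne_neg_self (ε i))
      simpa only [heq, AddCircle.coe_sub, smul_sub] using units_smul_mem_capacity hI this (ε i)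
    · have := units_smul_mem_capacity hI (hadd i) (-ε i)
      simpa only [Int.units_ne_iff_eq_neg.1 hne, AddCircle.coe_add, smul_add, Units.neg_smul,
        neg_add_eq_sub, ← sub_eq_neg_add] using this
  rcases hsub with hn | ⟨j, hj⟩
  · exact (even_iff_exists_alternating.1 hn).imp fun ε hε i => Or.inl (hε i)
  · obtain ⟨ε, hε⟩ := exists_alternating_off j
    exact ⟨ε, fun i => (eq_or_ne i j).elim (fun h => h ▸ Or.inr hj) fun h => Or.inl (hε i h)⟩

theorem exists_isRimAssignment_of_band_zero (hI : ∀ z ∈ I, -z ∈ I) (h₀ : band 0 ⊆ I)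
    (h : Even n ∨ band 2 ⊆ I ∧ ∃ j, ¬ (j ∈ R ↔ j + 1 ∈ R)) : ∃ x, IsRimAssignment R I x := by
  -- Spokes get norm `9 / 5` (both ends in `R`), `12 / 5` (no end in `R`) and `3 / 10` (one end in
  -- `R`); the exceptional spoke, if there is one, gets norm `21 / 10`.
  refine exists_isRimAssignment_of_alternating hI (fun i => if i ∈ R then 9 / 10 else -6 / 5)
    (fun i => coe_mem_capacity 0 ?_ ?_ ?_) (fun i => coe_mem_capacity 0 ?_ ?_ ?_)
    (h.imp_right fun ⟨h₂, j, hj⟩ => ⟨j, ?defect⟩)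
  case defect =>
    rw [not_iff, iff_comm] at hj
    refine coe_mem_capacity 2 ?_ ?_ ?_ <;> by_cases h : j ∈ R <;> norm_num [hj, h, h₂]
  all_goals by_cases hi : i ∈ R <;> by_cases hi' : i + 1 ∈ R <;> norm_num [hi, hi', h₀]

theorem exists_isRimAssignment_of_band_zero_of_three (hn : 1 < n) (hI : ∀ z ∈ I, -z ∈ I)
    (h₀ : band 0 ⊆ I) {j : Fin n} (hprev : j ∈ R ↔ j + 1 ∈ R) (hnext : j + 1 ∈ R ↔ j + 1 + 1 ∈ R)
    (h₂ : j + 1 ∈ R → band 2 ⊆ I) : ∃ x, IsRimAssignment R I x := by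
  have hne := fin_add_one_ne hn
  -- As `5 / 2 = -5 / 2` in `ℝ/5ℤ`, the two spokes at `j + 1` have the same norm whatever the signs:
  -- `8 / 5` next to `9 / 10` and `13 / 10` next to `-6 / 5`.
  refine exists_isRimAssignment_of_alternating hI
    (fun i => if i = j + 1 then 5 / 2 else if i ∈ R then 9 / 10 else -6 / 5)
    (fun i => ?_) (fun i => ?_) (Or.inr ⟨j + 1, ?_⟩)
  · by_cases hij : i = j + 1
    · refine coe_mem_capacity 2 ?_ ?_ ?_ <;> norm_num [hij, h₂]
      assumption
    · refine coe_mem_capacity 0 ?_ ?_ ?_ <;> by_cases hi : i ∈ R <;> norm_num [hij, hi, h₀]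
  · refine coe_mem_capacity 0 ?_ ?_ ?_
    all_goals
      by_cases hij : i = j + 1
      · by_cases h : j + 1 + 1 ∈ R <;> norm_num [hij, hnext, h, hne (j + 1)]
      · by_cases hij' : i = j
        · by_cases h : j + 1 ∈ R <;> norm_num [hij', hprev, h, (hne j).symm]
        · by_cases hi : i ∈ R <;> by_cases hi' : i + 1 ∈ R <;> norm_num [hi, hi', h₀, hij, hij']
  · refine coe_mem_capacity 0 ?_ ?_ ?_
    all_goals by_cases h : j + 1 + 1 ∈ R <;> norm_num [hnext, h, hne (j + 1)]

theorem exists_isRimAssignment_of_even_of_band_one (hI : ∀ z ∈ I, -z ∈ I) (h₁ : band 1 ⊆ I)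
    (hn : Even n) : ∃ x, IsRimAssignment R I x := by
  refine exists_isRimAssignment_of_alternating hI (fun _ => 8 / 5)
    (fun i => coe_mem_capacity 1 ?_ ?_ ?_) (fun i => coe_mem_capacity 1 ?_ ?_ ?_) (Or.inl hn)
  all_goals norm_num [h₁]

theorem exists_isRimAssignment_of_band_one (hn : 1 < n) (hI : ∀ z ∈ I, -z ∈ I)
    (h₁ : band 1 ⊆ I) {j : Fin n} (hj : j ∈ R → band 2 ⊆ I)
    (hthree : j + 1 + 1 + 1 = j → ¬ (j + 1 ∈ R ↔ j + 1 + 1 ∈ R) → band 2 ⊆ I) :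
    ∃ x, IsRimAssignment R I x := by
  have hne := fin_add_one_ne hn
  -- As `5 / 2 = -5 / 2` in `ℝ/5ℤ`, the spokes at `j` have norm `11 / 10` whatever the signs.  The
  -- other norms are `19 / 10` and `8 / 5`, and `11 / 5` for the third spoke if `n = 3`.
  refine exists_isRimAssignment_of_alternating hI
    (fun i => if i = j then 5 / 2 else if i = j + 1 ∨ i + 1 = j then 7 / 5 else 17 / 10)
    (fun i => ?_) (fun i => ?_) (Or.inr ⟨j, ?_⟩)
  · by_cases hij : i = j
    · subst hij
      refine coe_mem_capacity 2 ?_ ?_ ?_ <;> norm_num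
      assumption
    · refine coe_mem_capacity 1 ?_ ?_ ?_ <;> split_ifs <;> norm_num [h₁]
  · by_cases hboth : i = j + 1 ∧ i + 1 + 1 = j
    · obtain ⟨rfl, h3⟩ := hboth
      have h2 : j + 1 + 1 ≠ j := fun h => hne j (by rwa [h] at h3)
      refine coe_mem_capacity 2 ?_ ?_ ?_ <;> norm_num [hne, h3, h2]
      exact fun h => hthree h3 h
    · refine coe_mem_capacity 1 ?_ ?_ ?_
      all_goals
        by_cases hij : i = j
        · norm_num [hij, hne, h₁]
        · by_cases hij' : i + 1 = j
          · norm_num [hij', hij, h₁]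
          · simp only [hij, hij', add_left_inj, if_false, or_false, false_or]
            split_ifs with h h'
            · exact absurd ⟨h, h'⟩ hboth
            all_goals norm_num [h₁]
  · refine coe_mem_capacity 1 ?_ ?_ ?_ <;> norm_num [hne, h₁]

theorem exists_isRimAssignment_of_band_zero_one (hn : 1 < n) (hI : ∀ z ∈ I, -z ∈ I)
    (h₀ : band 0 ⊆ I) (h₁ : band 1 ⊆ I) {j : Fin n} (hj : j ∈ R)
    (hagree : ∀ i k, i ≠ j → k ≠ j → (i ∈ R ↔ k ∈ R)) : ∃ x, IsRimAssignment R I x := by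
  have hne := fin_add_one_ne hn
  -- The spokes at `j` have norm `7 / 4` or `5 / 4`, depending on the signs, and the others `2`.
  refine exists_isRimAssignment_of_alternating hI (fun i => if i = j then 1 / 4 else 3 / 2)
    (fun i => ?_) (fun i => ?_) (Or.inr ⟨j, ?_⟩)
  · by_cases hij : i = j
    · refine coe_mem_capacity 0 ?_ ?_ ?_ <;> norm_num [hij, hj, h₀]
    · refine coe_mem_capacity 1 ?_ ?_ ?_ <;> norm_num [hij, h₁]
  · refine coe_mem_capacity 1 ?_ ?_ ?_
    all_goals
      by_cases hij : i = j
      · norm_num [hij, hne, h₁]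
      · by_cases hij' : i + 1 = j
        · norm_num [hij', hij, h₁]
        · norm_num [hij', hij, hagree i _ hij hij']
  · refine coe_mem_capacity 1 ?_ ?_ ?_ <;> norm_num [hne, h₁]

end Constructions

section Obstructions

variable {n : ℕ} [NeZero n] {R : Set (Fin n)} {I : Set (AddCircle (5 : ℝ))}
  {x : Fin n → AddCircle (5 : ℝ)}

theorem IsRimAssignment.nonempty (hx : IsRimAssignment R I x) (hR : R.Nonempty) : I.Nonempty :=
  hR.imp' x fun i hi => (mem_capacity_iff.1 (hx i).1).1 hi

theorem not_isRimAssignment_of_subset_arc_two_three (hI : I ⊆ arc 2 3) (hR : R.Nonempty) :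
    ¬ IsRimAssignment R I x := by
  rw [arc_two_three] at hI
  obtain ⟨j, hj⟩ := hR
  intro hx
  have hperim := norm_add_norm_add_norm_sub_le (by norm_num) (x (j + 1)) (x j)
  have hvertex := mem_capacity_iff.1 (hx (j + 1)).1
  have hedge := mem_capacity_iff.1 (hx j).2
  have h₁ : 2 < ‖x j‖ := hI ((mem_capacity_iff.1 (hx j).1).1 hj)
  by_cases hj' : j + 1 ∈ R
  · have h₂ : 2 < ‖x (j + 1)‖ := hI (hvertex.1 hj')
    have h₃ := hedge.2 (by simp [hj, hj'])
    linarith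
  · have h₂ := hvertex.2 hj'
    have h₃ : 2 < ‖x (j + 1) - x j‖ := hI (hedge.1 (by simp [hj, hj']))
    linarith

theorem IsRimAssignment.norm_lt_two (hx : IsRimAssignment R I x) (hI : I ⊆ arc 4 1)
    (hR : ∀ i, i ∈ R ∨ i + 1 ∈ R ∨ i + 1 + 1 ∈ R) {i : Fin n} (hi : i ∉ R) : ‖x i‖ < 2 := by
  rw [arc_four_one] at hI
  have hin {i} (hi : i ∈ R) : ‖x i‖ < 1 := hI ((mem_capacity_iff.1 (hx i).1).1 hi)
  have hcross {i} (hi : ¬ (i ∈ R ↔ i + 1 ∈ R)) : ‖x (i + 1) - x i‖ < 1 :=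
    hI ((mem_capacity_iff.1 (hx i).2).1 hi)
  obtain ⟨k, rfl⟩ : ∃ k, k + 1 = i := ⟨i - 1, sub_add_cancel i 1⟩
  rcases hR k with hk | hk | hk
  · linarith [hin hk, hcross (i := k) (by simp [hk, hi]), norm_sub_norm_le (x (k + 1)) (x k)]
  · exact absurd hk hi
  · linarith [hin hk, hcross (i := k + 1) (by simp [hk, hi]),
      norm_sub_norm_le (x (k + 1)) (x (k + 1 + 1)), norm_sub_rev (x (k + 1)) (x (k + 1 + 1))]

/- The signs of `x i` and `x (i + 1)` are opposite if `i` and `i + 1` are on the same side of `R`,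
and equal otherwise, so multiplying by `-1` off `R` makes them alternate. -/
theorem IsRimAssignment.even_of_subset_arc_four_one (hx : IsRimAssignment R I x)
    (hI : I ⊆ arc 4 1) (hR : ∀ i, i ∈ R ∨ i + 1 ∈ R ∨ i + 1 + 1 ∈ R) : Even n := by
  have hout₂ {i} (hi : i ∉ R) : ‖x i‖ < 2 := hx.norm_lt_two hI hR hi
  rw [arc_four_one] at hI
  have hin {i} (hi : i ∈ R) : ‖x i‖ < 1 := hI ((mem_capacity_iff.1 (hx i).1).1 hi)
  have hout {i} (hi : i ∉ R) : 1 < ‖x i‖ := (mem_capacity_iff.1 (hx i).1).2 hi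
  have hcross {i} (hi : ¬ (i ∈ R ↔ i + 1 ∈ R)) : ‖x (i + 1) - x i‖ < 1 :=
    hI ((mem_capacity_iff.1 (hx i).2).1 hi)
  have hsame {i} (hi : i ∈ R ↔ i + 1 ∈ R) : 1 < ‖x (i + 1) - x i‖ :=
    (mem_capacity_iff.1 (hx i).2).2 (not_not.2 hi)
  choose ε hε using fun i => exists_units_smul_norm_eq (by norm_num) (x i)
  refine even_iff_exists_alternating.2 ⟨fun i => ε i * if i ∈ R then 1 else -1, fun i => ?_⟩
  have hopposite (h : i ∈ R ↔ i + 1 ∈ R) : ε (i + 1) = -ε i := by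
    refine sign_eq_neg_of_abs_lt_norm_sub (by norm_num) (hε _) (hε i) ((hsame h).trans' ?_)
    rw [abs_sub_lt_iff]
    by_cases hi : i ∈ R
    · constructor <;> linarith [hin hi, hin (h.1 hi), norm_nonneg (x i), norm_nonneg (x (i + 1))]
    · have hi' := mt h.2 hi
      constructor <;> linarith [hout hi, hout hi', hout₂ hi, hout₂ hi']
  have hequal (h : ¬ (i ∈ R ↔ i + 1 ∈ R)) : ε (i + 1) = ε i := by
    refine sign_eq_of_norm_sub_lt_min (by norm_num) (hε _) (hε i) ((hcross h).trans ?_)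
    rw [lt_min_iff]
    by_cases hi : i ∈ R
    · have hi' : i + 1 ∉ R := fun hi' => h (iff_of_true hi hi')
      constructor <;> linarith [hin hi, hout hi', hout₂ hi', norm_nonneg (x i)]
    · have hi' : i + 1 ∈ R := by_contra fun hi' => h (iff_of_false hi hi')
      constructor <;> linarith [hin hi', hout hi, hout₂ hi, norm_nonneg (x (i + 1))]
  beta_reduce
  by_cases h : i ∈ R ↔ i + 1 ∈ R
  · rw [hopposite h, if_congr h.symm rfl rfl, neg_mul]
  · rw [hequal h, if_congr (not_iff.1 h).symm rfl rfl, ite_not]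
    split_ifs <;> simp

theorem IsRimAssignment.even_of_subset_arc_one_two_union_arc_three_four
    (hx : IsRimAssignment Set.univ I x) (hI : I ⊆ arc 1 2 ∪ arc 3 4) : Even n := by
  rw [arc_one_two_union_arc_three_four] at hI
  have hnorm (i : Fin n) : 1 < ‖x i‖ ∧ ‖x i‖ < 2 :=
    hI ((mem_capacity_iff.1 (hx i).1).1 trivial)
  have hsub (i : Fin n) : 1 < ‖x (i + 1) - x i‖ :=
    (mem_capacity_iff.1 (hx i).2).2 (not_not.2 Iff.rfl)
  choose ε hε using fun i => exists_units_smul_norm_eq (by norm_num) (x i)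
  refine even_iff_exists_alternating.2 ⟨ε, fun i =>
    sign_eq_neg_of_abs_lt_norm_sub (by norm_num) (hε _) (hε i) ((hsub i).trans' ?_)⟩
  rw [abs_sub_lt_iff]
  constructor <;> linarith [hnorm i, hnorm (i + 1)]

/- The symmetry of the tetrahedron `W_3` which exchanges the external triangle with the triangle
through the hub and `v_j`, `v_{j+1}`. -/
theorem exists_isRimAssignment_univ_of_singleton {I : Set (AddCircle (5 : ℝ))}
    (hI : ∀ z ∈ I, -z ∈ I) {j : Fin 3} {x : Fin 3 → AddCircle (5 : ℝ)}
    (hx : IsRimAssignment {j} I x) : ∃ y : Fin 3 → AddCircle (5 : ℝ),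
      IsRimAssignment Set.univ I y := by
  have hj₁ : j + 1 ≠ j := fin_add_one_ne (by norm_num) j
  have hj₂ : j + 1 + 1 ≠ j := (by decide : ∀ j : Fin 3, j + 1 + 1 ≠ j) j
  have hj₃ : j + 1 + 1 + 1 = j := (by decide : ∀ j : Fin 3, j + 1 + 1 + 1 = j) j
  obtain ⟨h₀, h₀₁⟩ : x j ∈ I ∧ x (j + 1) - x j ∈ I := by
    simpa [mem_capacity_iff, hj₁] using hx j
  obtain ⟨h₁, h₁₂⟩ : 1 < ‖x (j + 1)‖ ∧ 1 < ‖x (j + 1 + 1) - x (j + 1)‖ := by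
    simpa [mem_capacity_iff, hj₁, hj₂] using hx (j + 1)
  obtain ⟨h₂, h₂₀⟩ : 1 < ‖x (j + 1 + 1)‖ ∧ x j - x (j + 1 + 1) ∈ I := by
    simpa [mem_capacity_iff, hj₂, hj₃] using hx (j + 1 + 1)
  refine ⟨fun i => if i = j then -x j else x i - x j, fun i => ?_⟩
  rcases fin_three_eq_or i j with rfl | rfl | rfl
  · simpa [mem_capacity_iff, hj₁] using ⟨hI _ h₀, h₁⟩
  · simpa [mem_capacity_iff, hj₁, hj₂] using ⟨h₀₁, h₁₂⟩
  · have h₀₂ : x (j + 1 + 1) - x j ∈ I := by simpa using hI _ h₂₀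
    have hspoke : -x j - (x (j + 1 + 1) - x j) = -x (j + 1 + 1) := by abel
    simpa [mem_capacity_iff, hj₂, hj₃, hspoke] using ⟨h₀₂, h₂⟩

end Obstructions

section Classification

variable {n : ℕ} [NeZero n] {R : Set (Fin n)} {I : Set (AddCircle (5 : ℝ))}

/-- `R = rimSet J` for an even subgraph `J` of an odd wheel which is the external cycle or, for
`n = 3`, any triangle. -/
def IsExceptional (R : Set (Fin n)) : Prop :=
  Odd n ∧ (R = Set.univ ∨ n = 3 ∧ ∃ j, R = {j})

theorem isExceptional_rimSet_iff (hn : 3 ≤ n) {J : Set (wheel n).E}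
    (hJ : (wheel n).IsEvenSubgraph J) :
    IsExceptional (rimSet J) ↔
      (3 < n ∧ Odd n ∧ J = Set.range rim) ∨ (n = 3 ∧ IsTriangle n J) := by
  obtain rfl | hlt := hn.eq_or_lt
  · have hodd : Odd 3 := by decide
    simp [IsExceptional, isTriangle_three_iff hJ, hodd]
  · simp [IsExceptional, eq_range_rim_iff hJ, hlt, hlt.ne']

theorem exists_not_mem_of_not_isExceptional (hn : 3 ≤ n) (hodd : Odd n) (hR : ¬ IsExceptional R) :
    ∃ j ∉ R, j + 1 + 1 + 1 = j → (j + 1 ∈ R ↔ j + 1 + 1 ∈ R) := by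
  rw [IsExceptional, and_iff_right hodd, not_or] at hR
  obtain ⟨j, hj⟩ := (Set.ne_univ_iff_exists_notMem R).1 hR.1
  refine ⟨j, hj, fun hthree => by_contra fun hne => hR.2 ?_⟩
  obtain rfl : n = 3 := by_contra fun hn' => fin_add_three_ne (by omega) j hthree
  refine ⟨rfl, ?_⟩
  by_cases h₁ : j + 1 ∈ R
  · have h₂ : j + 1 + 1 ∉ R := fun h₂ => hne (iff_of_true h₁ h₂)
    refine ⟨j + 1, Set.eq_singleton_iff_unique_mem.2 ⟨h₁, fun i hi => ?_⟩⟩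
    rcases fin_three_eq_or i j with rfl | rfl | rfl <;> trivial
  · have h₂ : j + 1 + 1 ∈ R := by_contra fun h₂ => hne (iff_of_false h₁ h₂)
    refine ⟨j + 1 + 1, Set.eq_singleton_iff_unique_mem.2 ⟨h₂, fun i hi => ?_⟩⟩
    rcases fin_three_eq_or i j with rfl | rfl | rfl <;> trivial

theorem IsExceptional.exists_mem_forall_mem_iff (hR : IsExceptional R) :
    ∃ j ∈ R, ∀ i k, i ≠ j → k ≠ j → (i ∈ R ↔ k ∈ R) := by
  obtain ⟨-, rfl | ⟨-, j, rfl⟩⟩ := hR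
  · exact ⟨0, trivial, fun _ _ _ _ => Iff.rfl⟩
  · exact ⟨j, rfl, fun _ _ hi hk => iff_of_false hi hk⟩

theorem IsRimAssignment.not_isExceptional {x : Fin n → AddCircle (5 : ℝ)}
    (hx : IsRimAssignment R I x) (hI : ∀ z ∈ I, -z ∈ I) (hI' : I ⊆ arc 1 2 ∪ arc 3 4) :
    ¬ IsExceptional R := by
  rintro ⟨hodd, rfl | ⟨rfl, j, rfl⟩⟩
  · exact Nat.not_even_iff_odd.2 hodd (hx.even_of_subset_arc_one_two_union_arc_three_four hI')
  · obtain ⟨y, hy⟩ := exists_isRimAssignment_univ_of_singleton hI hx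
    exact Nat.not_even_iff_odd.2 hodd (hy.even_of_subset_arc_one_two_union_arc_three_four hI')

theorem exists_isRimAssignment_of_mem_SI5_of_band_one (hn : 3 ≤ n) (hI : I ∈ SI5)
    (h₁ : band 1 ⊆ I) (h : ¬ (I ⊆ arc 1 2 ∪ arc 3 4 ∧ IsExceptional R)) :
    ∃ x, IsRimAssignment R I x := by
  have hneg : ∀ z ∈ I, -z ∈ I := fun z => (hI.1 z).1
  have hn' : 1 < n := by omega
  rcases Nat.even_or_odd n with heven | hodd
  · exact exists_isRimAssignment_of_even_of_band_one hneg h₁ heven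
  by_cases hR : IsExceptional R
  · by_cases h₂ : band 2 ⊆ I
    · exact exists_isRimAssignment_of_band_one hn' hneg h₁ (j := 0) (fun _ => h₂) fun _ _ => h₂
    · have h₀ : band 0 ⊆ I := by_contra fun h₀ =>
        h ⟨subset_arc_one_two_union_arc_three_four hI h₀ h₂, hR⟩
      obtain ⟨j, hj, hagree⟩ := hR.exists_mem_forall_mem_iff
      exact exists_isRimAssignment_of_band_zero_one hn' hneg h₀ h₁ hj hagree
  · obtain ⟨j, hj, hagree⟩ := exists_not_mem_of_not_isExceptional hn hodd hR
    exact exists_isRimAssignment_of_band_one hn' hneg h₁ (fun h => absurd h hj)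
      fun hthree h => absurd (hagree hthree) h

theorem exists_isRimAssignment_of_mem_SI5_of_band_zero (hn : 1 < n) (hI : I ∈ SI5)
    (hR : R.Nonempty) (h₀ : band 0 ⊆ I) (h₁ : ¬ band 1 ⊆ I)
    (h : ¬ (I ⊆ arc 4 1 ∧ Odd n ∧ ∀ i, i ∈ R ∨ i + 1 ∈ R ∨ i + 1 + 1 ∈ R)) :
    ∃ x, IsRimAssignment R I x := by
  have hneg : ∀ z ∈ I, -z ∈ I := fun z => (hI.1 z).1
  rcases Nat.even_or_odd n with heven | hodd
  · exact exists_isRimAssignment_of_band_zero hneg h₀ (Or.inl heven)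
  by_cases h₂ : band 2 ⊆ I
  · by_cases huniv : R = Set.univ
    · exact exists_isRimAssignment_of_band_zero_of_three hn hneg h₀ (j := 0) (by simp [huniv])
        (by simp [huniv]) fun _ => h₂
    · exact exists_isRimAssignment_of_band_zero hneg h₀
        (Or.inr ⟨h₂, exists_not_mem_iff_add_one_mem hR huniv⟩)
  · simp only [subset_arc_four_one hI h₁ h₂, hodd, true_and, not_forall, not_or] at h
    obtain ⟨j, hj, hj₁, hj₂⟩ := h
    exact exists_isRimAssignment_of_band_zero_of_three hn hneg h₀ (iff_of_false hj hj₁)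
      (iff_of_false hj₁ hj₂) fun h => absurd h hj₁

theorem not_exists_isRimAssignment_iff (hn : 3 ≤ n) (hI : I ∈ SI5) (hR : R.Nonempty) :
    (¬ ∃ x, IsRimAssignment R I x) ↔
      I = ∅ ∨ I = arc 2 3 ∨
        (I ⊆ arc 4 1 ∧ Odd n ∧ ∀ i, i ∈ R ∨ i + 1 ∈ R ∨ i + 1 + 1 ∈ R) ∨
        (I ⊆ arc 1 2 ∪ arc 3 4 ∧ IsExceptional R) := by
  constructor
  · contrapose!
    rintro ⟨hne, hI₂, h, h'⟩
    by_cases h₁ : band 1 ⊆ I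
    · exact exists_isRimAssignment_of_mem_SI5_of_band_one hn hI h₁ fun ⟨h, hR⟩ => h' h hR
    · have h₀ : band 0 ⊆ I := by_contra fun h₀ => hI₂ (eq_arc_two_three hI hne h₀ h₁)
      exact exists_isRimAssignment_of_mem_SI5_of_band_zero (by omega) hI hR h₀ h₁ (by simpa using h)
  · rintro hcases ⟨x, hx⟩
    rcases hcases with rfl | rfl | ⟨hI₀, hodd, hthree⟩ | ⟨hI₁, hexc⟩
    · exact Set.not_nonempty_empty (hx.nonempty hR)
    · exact not_isRimAssignment_of_subset_arc_two_three subset_rfl hR hx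
    · exact Nat.not_even_iff_odd.2 hodd (hx.even_of_subset_arc_four_one hI₀ hthree)
    · exact hx.not_isExceptional (fun z => (hI.1 z).1) hI₁ hexc

end Classification

/-- summary theorem: for `n ≥ 3`, a nonempty even subgraph `J` of
the wheel `W_n` and `I ∈ SI_5`, the wheel has no `σ_{J,I}`-faithful flow iff
(i) `I = ∅`, or (ii) `I = (2,3)`, or (iii) `I ⊆ (4,1)`, `n` is odd and among any
three consecutive external edges at least one is in `J`, or (iv)
`I ⊆ (1,2) ∪ (3,4)` and either `n > 3` is odd and `J` is the external cycle, or
`n = 3` and `J` is a 3-cycle. -/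
theorem wheel_no_faithful_iff (n : ℕ) (hn : 3 ≤ n)
    (J : Set (wheel n).E) (hJ : (wheel n).IsEvenSubgraph J) (hJne : J.Nonempty)
    (I : Set (AddCircle (5 : ℝ))) (hI : I ∈ SI5) :
    ¬ (wheel n).HasFaithfulOn J I ↔
      (I = ∅ ∨ I = arc 2 3 ∨
        (I ⊆ arc 4 1 ∧ Odd n ∧ ∀ i : Fin n, Sum.inl i ∈ J ∨
          Sum.inl (rot n i) ∈ J ∨ Sum.inl (rot n (rot n i)) ∈ J) ∨
        (I ⊆ arc 1 2 ∪ arc 3 4 ∧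
          ((3 < n ∧ Odd n ∧ J = Set.range Sum.inl) ∨
           (n = 3 ∧ IsTriangle n J)))) := by
  have : NeZero n := ⟨by omega⟩
  have hiff := not_exists_isRimAssignment_iff hn hI (rimSet_nonempty hJ hJne)
  rw [← hasFaithfulOn_wheel_iff hJ, isExceptional_rimSet_iff hn hJ] at hiff
  simp only [rot_eq_add_one]
  exact hiff
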